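/- arXiv:2210.02824 — 3 statements merged into one kernel-verified Lean document; each statement's English description precedes it below -/
import Mathlib

section
/- Let f : ℝ^d → ℝ be twice continuously differentiable and strictly positive, let α ∈ (0,1) and ν ∈ ℝ^d, and define g : ℝ^d → ℝ by g(λ) = α·f(ν + (1−α)λ) + (1−α)·f(ν − αλ). Then the map λ ↦ log g(λ) is twice differentiable at λ = 0, its first Fréchet derivative at 0 is the zero linear map, and its second iterated Fréchet derivative at 0 equals (α(1−α)/f(ν)) times the second iterated Fréchet derivative of f at ν. (Equations (eq:g_nabla) and (eq:s2) of the paper: the λ-score of the reparameterized mixture log-density vanishes identically and the information on λ is carried by the second derivative ∇_{λλ} l(w; ψ*, α) = α(1−α) ∇_{θθ} f / f.) -/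
/-- Equations (eq:g_nabla) and (eq:s2): for the reparameterized two-component mixture
`g(λ) = α·f(ν + (1−α)λ) + (1−α)·f(ν − αλ)` with `f` positive and `C²` and `α ∈ (0,1)`,
the map `λ ↦ log g(λ)` is twice differentiable at `0`, its first derivative at `0`
vanishes, and its second iterated derivative at `0` is `(α(1−α)/f(ν))·D²f(ν)`. -/
theorem stmt_2 (d : ℕ) (f : (Fin d → ℝ) → ℝ) (hf : ContDiff ℝ 2 f)
    (hfpos : ∀ θ : Fin d → ℝ, 0 < f θ) (α : ℝ) (hα : α ∈ Set.Ioo (0 : ℝ) 1)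
    (ν : Fin d → ℝ) :
    ContDiffAt ℝ 2
        (fun lam : Fin d → ℝ =>
          Real.log (α * f (ν + (1 - α) • lam) + (1 - α) * f (ν - α • lam))) 0 ∧
    fderiv ℝ
        (fun lam : Fin d → ℝ =>
          Real.log (α * f (ν + (1 - α) • lam) + (1 - α) * f (ν - α • lam))) 0 = 0 ∧
    iteratedFDeriv ℝ 2
        (fun lam : Fin d → ℝ =>
          Real.log (α * f (ν + (1 - α) • lam) + (1 - α) * f (ν - α • lam))) 0
      = (α * (1 - α) / f ν) • iteratedFDeriv ℝ 2 f ν := by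
  have h2 : (2 : WithTop ℕ∞) ≠ 0 := by norm_num
  obtain ⟨h0, h1⟩ := hα
  have hg : ∀ x : Fin d → ℝ, 0 < α * f (ν + (1 - α) • x) + (1 - α) * f (ν - α • x) := fun x =>
    add_pos (mul_pos h0 (hfpos _)) (mul_pos (by linarith) (hfpos _))
  have hA : ∀ x : Fin d → ℝ, HasFDerivAt (fun x : Fin d → ℝ => ν + (1 - α) • x)
      ((1 - α) • ContinuousLinearMap.id ℝ (Fin d → ℝ)) x := fun x =>
    ((hasFDerivAt_id x).const_smul (1 - α)).const_add ν
  have hB : ∀ x : Fin d → ℝ, HasFDerivAt (fun x : Fin d → ℝ => ν - α • x)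
      (-(α • ContinuousLinearMap.id ℝ (Fin d → ℝ))) x := fun x =>
    ((hasFDerivAt_id x).const_smul α).const_sub ν
  have hfd : ∀ y, HasFDerivAt f (fderiv ℝ f y) y := fun y =>
    (hf.differentiable h2 y).hasFDerivAt
  have hfd2 : ∀ y, HasFDerivAt (fderiv ℝ f) (fderiv ℝ (fderiv ℝ f) y) y := fun y =>
    ((hf.fderiv_right (m := 1) (by norm_num)).differentiable (by norm_num) y).hasFDerivAt
  have hG : ∀ x : Fin d → ℝ, HasFDerivAt
      (fun x : Fin d → ℝ => α * f (ν + (1 - α) • x) + (1 - α) * f (ν - α • x))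
      ((α * (1 - α)) • (fderiv ℝ f (ν + (1 - α) • x) - fderiv ℝ f (ν - α • x))) x := by
    intro x
    have := (((hfd _).comp x (hA x)).const_mul α).add (((hfd _).comp x (hB x)).const_mul (1 - α))
    refine this.congr_fderiv ?_
    ext v
    simp
    ring
  have hL : ∀ x : Fin d → ℝ, HasFDerivAt
      (fun x : Fin d → ℝ => Real.log (α * f (ν + (1 - α) • x) + (1 - α) * f (ν - α • x)))
      ((α * f (ν + (1 - α) • x) + (1 - α) * f (ν - α • x))⁻¹ •
        ((α * (1 - α)) • (fderiv ℝ f (ν + (1 - α) • x) - fderiv ℝ f (ν - α • x)))) x := fun x =>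
    (hG x).log (hg x).ne'
  refine ⟨?_, ?_, ?_⟩
  · refine ContDiffAt.log ?_ (hg 0).ne'
    exact ContDiff.contDiffAt (by fun_prop)
  · rw [(hL 0).fderiv]
    simp
  · have hD : HasFDerivAt (fun x : Fin d → ℝ =>
        (α * (1 - α)) • (fderiv ℝ f (ν + (1 - α) • x) - fderiv ℝ f (ν - α • x)))
        ((α * (1 - α)) • fderiv ℝ (fderiv ℝ f) ν) 0 := by
      have := (((hfd2 _).comp 0 (hA 0)).sub ((hfd2 _).comp 0 (hB 0))).const_smul (α * (1 - α))
      refine this.congr_fderiv ?_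
      ext v w
      simp
      ring
    have hI := ((hG 0).differentiableAt.inv (hg 0).ne').hasFDerivAt
    have hM := hI.smul hD
    ext m
    rw [iteratedFDeriv_two_apply, funext fun x => (hL x).fderiv]
    have hM' := hM.fderiv
    simp only [Pi.smul_def', Pi.inv_apply] at hM'
    erw [hM']
    simp [iteratedFDeriv_two_apply]
    field_simp
    ring
end

section
/- Let T ≥ 2 be a natural number. Suppose real constants a_μ, a_σ, a_{μμ}, a_{μσ}, a_{σσ} satisfy, for every y = (y₁, …, y_T) ∈ ℝ^T, the identity a_μ·Σ_{t=1}^T H₁(y_t) + (a_σ + a_{μμ})·Σ_{t=1}^T H₂(y_t) + (a_{μμ}/2)·Σ_{t=1}^T Σ_{s≠t} H₁(y_t)H₁(y_s) + a_{μσ}·Σ_{t=1}^T H₃(y_t) + a_{μσ}·Σ_{t=1}^T Σ_{s≠t} H₁(y_t)H₂(y_s) + 3a_{σσ}·Σ_{t=1}^T H₄(y_t) + (a_{σσ}/2)·Σ_{t=1}^T Σ_{s≠t} H₂(y_t)H₂(y_s) = 0. Then a_μ = a_σ = a_{μμ} = a_{μσ} = a_{σσ} = 0. (This is the no-multicollinearity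 claim in the proof of Proposition 3(c): for panel length T ≥ 2 the score vector of the panel normal mixture has no linear dependence, so the Fisher information matrix 𝓘 is non-singular; for T = 1 the conclusion fails because the functions corresponding to a_σ and a_{μμ} are collinear.) -/
/-- The `k`-th probabilists' Hermite polynomial as a real function. -/
noncomputable def hermiteFun (k : ℕ) (x : ℝ) : ℝ :=
  Polynomial.aeval x (Polynomial.hermite k)

lemma hF1 (x : ℝ) : hermiteFun 1 x = x := by
  simp [hermiteFun]

lemma hF2 (x : ℝ) : hermiteFun 2 x = x ^ 2 - 1 := by
  simp [hermiteFun, Polynomial.hermite_succ]; ring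

lemma hF3 (x : ℝ) : hermiteFun 3 x = x ^ 3 - 3 * x := by
  simp [hermiteFun, Polynomial.hermite_succ]; ring

lemma hF4 (x : ℝ) : hermiteFun 4 x = x ^ 4 - 6 * x ^ 2 + 3 := by
  simp [hermiteFun, Polynomial.hermite_succ]; ring

lemma cross_sum {T : ℕ} (k l : ℕ) (y : Fin T → ℝ) :
    ∑ t : Fin T, ∑ s ∈ Finset.univ.erase t, hermiteFun k (y t) * hermiteFun l (y s)
      = (∑ t, hermiteFun k (y t)) * (∑ t, hermiteFun l (y t))
        - ∑ t, hermiteFun k (y t) * hermiteFun l (y t) := by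
  rw [Finset.sum_mul, ← Finset.sum_sub_distrib]
  refine Finset.sum_congr rfl fun t _ => ?_
  rw [← Finset.mul_sum, Finset.sum_erase_eq_sub (Finset.mem_univ t)]
  ring

/-- No multicollinearity of the panel normal mixture score (proof of Proposition 3(c)):
for panel length `T ≥ 2`, if the displayed linear combination of Hermite-polynomial
score components vanishes identically on `ℝ^T`, then all coefficients vanish. -/
theorem stmt_5 (T : ℕ) (hT : 2 ≤ T)
    (aμ aσ aμμ aμσ aσσ : ℝ)
    (h : ∀ y : Fin T → ℝ,
      aμ * ∑ t : Fin T, hermiteFun 1 (y t)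
      + (aσ + aμμ) * ∑ t : Fin T, hermiteFun 2 (y t)
      + (aμμ / 2) * ∑ t : Fin T, ∑ s ∈ Finset.univ.erase t,
          hermiteFun 1 (y t) * hermiteFun 1 (y s)
      + aμσ * ∑ t : Fin T, hermiteFun 3 (y t)
      + aμσ * ∑ t : Fin T, ∑ s ∈ Finset.univ.erase t,
          hermiteFun 1 (y t) * hermiteFun 2 (y s)
      + 3 * aσσ * ∑ t : Fin T, hermiteFun 4 (y t)
      + (aσσ / 2) * ∑ t : Fin T, ∑ s ∈ Finset.univ.erase t,
          hermiteFun 2 (y t) * hermiteFun 2 (y s) = 0) :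
    aμ = 0 ∧ aσ = 0 ∧ aμμ = 0 ∧ aμσ = 0 ∧ aσσ = 0 := by
  obtain ⟨n, rfl⟩ : ∃ n, T = n + 2 := ⟨T - 2, by omega⟩
  simp only [cross_sum] at h
  have key : ∀ a b : ℝ, _ := fun a b =>
    h (Fin.cons a (Fin.cons b (fun _ : Fin n => (0 : ℝ))))
  simp only [Fin.sum_univ_succ, Fin.cons_zero, Fin.cons_succ, hF1, hF2, hF3, hF4,
    Finset.sum_const, Finset.card_univ, Fintype.card_fin, nsmul_eq_mul] at key
  have e4 : aσσ = 0 := by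
    linarith [key 2 0, key 1 0, key 0 0, key (-1) 0, key (-2) 0]
  subst e4
  have e3 : aμσ = 0 := by
    linarith [key 2 0, key 1 0, key (-1) 0, key (-2) 0]
  subst e3
  have e2 : aμμ = 0 := by
    linarith [key 1 1, key 1 0, key 0 1, key 0 0]
  subst e2
  have e1 : aμ = 0 := by
    linarith [key 1 0, key (-1) 0]
  subst e1
  have e0 : aσ = 0 := by
    linarith [key 1 0, key 0 0]
  exact ⟨rfl, e0, rfl, rfl, rfl⟩
end

section
/- Let T ≥ 2 be a natural number, ε > 0, and let F : ℝ → ℝ be the cumulative distribution function of the chi-square distribution with T − 1 degrees of freedom, F(u) = (chi-square(T−1))((−∞, u]). Then F((εx)^{2/T}) / x → +∞ as x → 0 from the right. -/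
open MeasureTheory ProbabilityTheory Filter

/-- The chi-square distribution with `k` degrees of freedom (`k` a real parameter):
the Gamma distribution with shape `k/2` and rate `1/2`. -/
noncomputable def chiSqMeasure (k : ℝ) : Measure ℝ :=
  gammaMeasure (k / 2) (1 / 2)

/-- The cumulative distribution function of the chi-square distribution with `k`
degrees of freedom. -/
noncomputable def chiSqCDF (k : ℝ) (u : ℝ) : ℝ :=
  (chiSqMeasure k (Set.Iic u)).toReal

theorem chiSq_lower (a : ℝ) (ha : 0 < a) : ∃ c : ℝ, 0 < c ∧ ∀ u : ℝ, 0 < u → u ≤ 1 →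
    c * u ^ a ≤ (gammaMeasure a (1 / 2) (Set.Iic u)).toReal := by
  have hG : 0 < Real.Gamma a := Real.Gamma_pos_of_pos ha
  have hK : 0 < (1 / 2 : ℝ) ^ a / Real.Gamma a := by positivity
  set K := (1 / 2 : ℝ) ^ a / Real.Gamma a with hKdef
  refine ⟨K * (1 / 2 : ℝ) ^ a * Real.exp (-(1 / 2)) * (1 / 2), by positivity, ?_⟩
  intro u hu hu1
  haveI := isProbabilityMeasure_gammaMeasure ha (show (0 : ℝ) < 1 / 2 by norm_num)
  have hfin : gammaMeasure a (1 / 2) (Set.Iic u) ≠ ⊤ := measure_ne_top _ _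
  rw [← ENNReal.ofReal_le_iff_le_toReal hfin]
  have hsub : Set.Icc (u / 2) u ⊆ Set.Iic u := fun x hx => hx.2
  refine le_trans ?_ (measure_mono hsub)
  rw [gammaMeasure, withDensity_apply _ measurableSet_Icc]
  have hlow : ∫⁻ s in Set.Icc (u / 2) u,
      ENNReal.ofReal (K * ((u / 2) ^ a / u) * Real.exp (-(1 / 2))) ≤
      ∫⁻ s in Set.Icc (u / 2) u, gammaPDF a (1 / 2) s := by
    refine setLIntegral_mono' measurableSet_Icc ?_
    intro s hs
    have hs0 : 0 < s := by linarith [hs.1]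
    rw [gammaPDF_of_nonneg hs0.le]
    apply ENNReal.ofReal_le_ofReal
    have h1 : (u / 2) ^ a / u ≤ s ^ (a - 1) := by
      rw [Real.rpow_sub_one hs0.ne']
      have := Real.rpow_le_rpow (by positivity) hs.1 ha.le
      exact div_le_div₀ (by positivity) this hs0 hs.2
    have h2 : Real.exp (-(1 / 2)) ≤ Real.exp (-(1 / 2 * s)) := by
      apply Real.exp_le_exp.2
      linarith [hs.2]
    gcongr
  refine le_trans (le_of_eq ?_) hlow
  rw [setLIntegral_const, Real.volume_Icc, ← ENNReal.ofReal_mul (by positivity)]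
  congr 1
  rw [div_eq_mul_one_div u 2, Real.mul_rpow hu.le (by norm_num)]
  field_simp
  ring

/-- Key step of Lemma 1 (via L'Hôpital's rule): for `T ≥ 2` and `ε > 0`, the ratio
`F((εx)^{2/T}) / x` tends to `+∞` as `x → 0⁺`, where `F` is the chi-square(T−1) CDF. -/
theorem stmt_10 (T : ℕ) (hT : 2 ≤ T) (ε : ℝ) (hε : 0 < ε) :
    Tendsto (fun x : ℝ => chiSqCDF ((T : ℝ) - 1) ((ε * x) ^ ((2 : ℝ) / (T : ℝ))) / x)
      (nhdsWithin 0 (Set.Ioi 0)) atTop := by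
  have hT' : (2 : ℝ) ≤ T := by exact_mod_cast hT
  have hT0 : (0 : ℝ) < T := by linarith
  obtain ⟨c, hc, h⟩ := chiSq_lower (((T : ℝ) - 1) / 2) (by linarith)
  have hp : 0 < 1 / (T : ℝ) := by positivity
  have hlim : Tendsto (fun x : ℝ => c * ε ^ (1 - 1 / (T : ℝ)) * x ^ (-(1 / (T : ℝ))))
      (nhdsWithin 0 (Set.Ioi 0)) atTop :=
    Tendsto.const_mul_atTop (by positivity) (tendsto_rpow_neg_nhdsGT_zero (by linarith))
  refine tendsto_atTop_mono' _ ?_ hlim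
  have hmem : Set.Ioo (0 : ℝ) (1 / ε) ∈ nhdsWithin (0 : ℝ) (Set.Ioi 0) :=
    Ioo_mem_nhdsGT (by positivity)
  filter_upwards [hmem] with x hx
  have hx0 : 0 < x := hx.1
  have hex : ε * x ≤ 1 := by
    have := (lt_div_iff₀ hε).1 hx.2
    linarith
  have hu := h ((ε * x) ^ ((2 : ℝ) / T)) (by positivity)
    (Real.rpow_le_one (by positivity) hex (by positivity))
  rw [le_div_iff₀ hx0]
  refine le_trans (le_of_eq ?_) hu
  rw [← Real.rpow_mul (by positivity)]
  have he : (2 : ℝ) / T * (((T : ℝ) - 1) / 2) = 1 - 1 / T := by field_simp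
  rw [he, Real.mul_rpow hε.le hx0.le, sub_eq_add_neg, Real.rpow_add hx0, Real.rpow_one]
  ring
end
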